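/- Let μ > 0 and σ > 0, let φ_{m,σ}(x) = (1/(σ√(2π)))·exp(−(x−m)²/(2σ²)), and for t > 0 define the three group risks with equal priors: R₁(t) = (∫_{(-∞,−t]} φ_{μ,σ})/(∫_{(-∞,−t]} φ_{μ,σ} + ∫_{(-∞,−t]} φ_{−μ,σ}), R₂(t) = (∫_{(−t,t]} φ_{μ,σ})/(∫_{(−t,t]} φ_{μ,σ} + ∫_{(−t,t]} φ_{−μ,σ}), and R₃(t) = (∫_{(t,∞)} φ_{μ,σ})/(∫_{(t,∞)} φ_{μ,σ} + ∫_{(t,∞)} φ_{−μ,σ}). Then the Interval Risk Deviation with respect to r = (0, 1/2, 1), namely IRD(t) = √(R₁(t)² + (R₂(t) − 1/2)² + (R₃(t) − 1)²), converges to 0 as t → ∞. -/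

import Mathlib

/-!
Reflection `x ↦ -x` exchanges the two class densities. It therefore makes the two class masses of
the middle group equal, so `R₂ t = 1 / 2` exactly for `t > 0` (`R₂_eq_half`), and it gives
`R₃ t = 1 - R₁ t` (`R₃_sub_one`). Only `R₁ t → 0` remains. On `(-∞, -t]` the likelihood ratio of the
two classes is `exp (2 μ x / σ²) ≤ exp (-2 μ t / σ²)` (`gaussDensity_le_of_le`); integrating this
bound gives `0 ≤ R₁ t ≤ exp (-2 μ t / σ²)` (`R₁_le`).
-/

open MeasureTheory Filter

/-- The Gaussian density with mean `m` and standard deviation `σ`. -/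
noncomputable def gaussDensity (m σ x : ℝ) : ℝ :=
  (1 / (σ * Real.sqrt (2 * Real.pi))) * Real.exp (-(x - m) ^ 2 / (2 * σ ^ 2))

/-- Risk of the left group `(-∞, -t]` with equal priors. -/
noncomputable def R₁ (μ σ t : ℝ) : ℝ :=
  (∫ x in Set.Iic (-t), gaussDensity μ σ x) /
    ((∫ x in Set.Iic (-t), gaussDensity μ σ x) +
      (∫ x in Set.Iic (-t), gaussDensity (-μ) σ x))

/-- Risk of the middle group `(-t, t]` with equal priors. -/
noncomputable def R₂ (μ σ t : ℝ) : ℝ :=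
  (∫ x in Set.Ioc (-t) t, gaussDensity μ σ x) /
    ((∫ x in Set.Ioc (-t) t, gaussDensity μ σ x) +
      (∫ x in Set.Ioc (-t) t, gaussDensity (-μ) σ x))

/-- Risk of the right group `(t, ∞)` with equal priors. -/
noncomputable def R₃ (μ σ t : ℝ) : ℝ :=
  (∫ x in Set.Ioi t, gaussDensity μ σ x) /
    ((∫ x in Set.Ioi t, gaussDensity μ σ x) +
      (∫ x in Set.Ioi t, gaussDensity (-μ) σ x))

lemma gaussDensity_pos (m : ℝ) {σ : ℝ} (hσ : 0 < σ) (x : ℝ) : 0 < gaussDensity m σ x := by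
  unfold gaussDensity
  positivity

lemma gaussDensity_neg (m σ x : ℝ) : gaussDensity (-m) σ (-x) = gaussDensity m σ x := by
  unfold gaussDensity
  congr 3
  ring

lemma integrable_gaussDensity (m : ℝ) {σ : ℝ} (hσ : 0 < σ) :
    Integrable (gaussDensity m σ) := by
  have h : 0 < 1 / (2 * σ ^ 2) := by positivity
  refine (((integrable_exp_neg_mul_sq h).comp_sub_right m).const_mul
    (1 / (σ * Real.sqrt (2 * Real.pi)))).congr (Eventually.of_forall fun x => ?_)
  simp only [gaussDensity]
  congr 2
  ring

lemma setIntegral_gaussDensity_pos (m : ℝ) {σ : ℝ} (hσ : 0 < σ) {s : Set ℝ}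
    (hs : 0 < volume s) : 0 < ∫ x in s, gaussDensity m σ x := by
  rw [integral_pos_iff_support_of_nonneg (fun x => (gaussDensity_pos m hσ x).le)
    (integrable_gaussDensity m hσ).integrableOn]
  have h : Function.support (gaussDensity m σ) = Set.univ :=
    Set.eq_univ_of_forall fun x => (gaussDensity_pos m hσ x).ne'
  simpa [h] using hs

/-- The likelihood ratio of the two classes at `x` is `exp (2 μ x / σ²)`, which increases in `x`. -/
lemma gaussDensity_le_of_le {μ σ t x : ℝ} (hμ : 0 < μ) (hσ : 0 < σ) (hx : x ≤ -t) :
    gaussDensity μ σ x ≤ Real.exp (-(2 * μ / σ ^ 2 * t)) * gaussDensity (-μ) σ x := by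
  have h : gaussDensity μ σ x = Real.exp (2 * μ / σ ^ 2 * x) * gaussDensity (-μ) σ x := by
    unfold gaussDensity
    rw [mul_left_comm, ← Real.exp_add]
    congr 2
    field_simp
    ring
  rw [h, ← mul_neg]
  have := (gaussDensity_pos (-μ) hσ x).le
  gcongr

lemma setIntegral_Iic_gaussDensity (m σ t : ℝ) :
    ∫ x in Set.Iic (-t), gaussDensity m σ x = ∫ x in Set.Ioi t, gaussDensity (-m) σ x := by
  simpa [gaussDensity_neg] using integral_comp_neg_Iic (-t) (gaussDensity (-m) σ)

lemma setIntegral_Ioc_gaussDensity (m σ : ℝ) {t : ℝ} (ht : 0 < t) :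
    ∫ x in Set.Ioc (-t) t, gaussDensity (-m) σ x = ∫ x in Set.Ioc (-t) t, gaussDensity m σ x := by
  have h := intervalIntegral.integral_comp_neg (a := -t) (b := t) (gaussDensity (-m) σ)
  simp only [gaussDensity_neg, neg_neg] at h
  rw [← intervalIntegral.integral_of_le (by linarith),
    ← intervalIntegral.integral_of_le (by linarith), h]

lemma R₁_nonneg (μ : ℝ) {σ : ℝ} (hσ : 0 < σ) (t : ℝ) : 0 ≤ R₁ μ σ t := by
  have h₁ := setIntegral_gaussDensity_pos μ hσ (s := Set.Iic (-t)) (by simp)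
  have h₂ := setIntegral_gaussDensity_pos (-μ) hσ (s := Set.Iic (-t)) (by simp)
  unfold R₁
  positivity

lemma R₁_le {μ σ : ℝ} (hμ : 0 < μ) (hσ : 0 < σ) (t : ℝ) :
    R₁ μ σ t ≤ Real.exp (-(2 * μ / σ ^ 2 * t)) := by
  have h₁ := setIntegral_gaussDensity_pos μ hσ (s := Set.Iic (-t)) (by simp)
  have h₂ := setIntegral_gaussDensity_pos (-μ) hσ (s := Set.Iic (-t)) (by simp)
  have h₃ : ∫ x in Set.Iic (-t), gaussDensity μ σ x ≤
      Real.exp (-(2 * μ / σ ^ 2 * t)) * ∫ x in Set.Iic (-t), gaussDensity (-μ) σ x := by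
    rw [← integral_const_mul]
    exact setIntegral_mono_on (integrable_gaussDensity μ hσ).integrableOn
      ((integrable_gaussDensity (-μ) hσ).const_mul _).integrableOn measurableSet_Iic
      fun x hx => gaussDensity_le_of_le hμ hσ hx
  unfold R₁
  rw [div_le_iff₀ (by positivity), mul_add]
  have := mul_pos (Real.exp_pos (-(2 * μ / σ ^ 2 * t))) h₁
  linarith

lemma R₂_eq_half (μ : ℝ) {σ t : ℝ} (hσ : 0 < σ) (ht : 0 < t) : R₂ μ σ t = 1 / 2 := by
  have h := setIntegral_gaussDensity_pos μ hσ (s := Set.Ioc (-t) t) (by simpa using by linarith)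
  unfold R₂
  rw [setIntegral_Ioc_gaussDensity μ σ ht]
  field_simp
  norm_num

lemma R₃_sub_one (μ : ℝ) {σ : ℝ} (hσ : 0 < σ) (t : ℝ) : R₃ μ σ t - 1 = -R₁ μ σ t := by
  have h₁ := setIntegral_gaussDensity_pos μ hσ (s := Set.Ioi t) (by simp)
  have h₂ := setIntegral_gaussDensity_pos (-μ) hσ (s := Set.Ioi t) (by simp)
  unfold R₁ R₃
  rw [setIntegral_Iic_gaussDensity, setIntegral_Iic_gaussDensity, neg_neg]
  field_simp
  ring

theorem gaussian_IRD_tendsto_zero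
    (μ σ : ℝ) (hμ : 0 < μ) (hσ : 0 < σ) :
    Tendsto
      (fun t : ℝ =>
        Real.sqrt ((R₁ μ σ t) ^ 2 + (R₂ μ σ t - 1 / 2) ^ 2 + (R₃ μ σ t - 1) ^ 2))
      atTop (nhds 0) := by
  have hR₁ : Tendsto (R₁ μ σ) atTop (nhds 0) := by
    have hc : 0 < 2 * μ / σ ^ 2 := by positivity
    exact squeeze_zero (R₁_nonneg μ hσ) (R₁_le hμ hσ)
      (Real.tendsto_exp_neg_atTop_nhds_zero.comp (tendsto_id.const_mul_atTop hc))
  have h : Tendsto (fun t => Real.sqrt ((R₁ μ σ t) ^ 2 + (1 / 2 - 1 / 2) ^ 2 + (-R₁ μ σ t) ^ 2))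
      atTop (nhds 0) := by
    have hsum := (((hR₁.pow 2).add_const (0 : ℝ)).add (hR₁.neg.pow 2)).sqrt
    simpa using hsum
  refine h.congr' ?_
  filter_upwards [eventually_gt_atTop 0] with t ht
  rw [R₂_eq_half μ hσ ht, R₃_sub_one μ hσ]
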